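/- Classification of symmetries of R: suppose q is not a root of unity, and let Z be an N×N matrix whose entries are rational functions of one complex variable, with Z invertible over the field of rational functions, such that R(u/v)(Z(u)⊗Z(v)) = (Z(u)⊗Z(v))R(u/v) for all u, v in a cofinite subset of ℂ^× (equivalently, as an identity of rational functions). Then there exist a nonzero rational function g, nonzero constants d_1,…,d_N ∈ ℂ^×, and an integer 0 ≤ m < N such that Z(u) = g(u)·diag(d_1,…,d_N)·(Z^ρ(u))^m as rational matrix functions, where Z^ρ(u) = Σ_{1≤i<N} E_{i,i+1} + u E_{N,1}. -/

import Mathlib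

/-! # The symmetries of the Bazhanov–Jimbo R-matrix

Up to the scalar `f_q(w)`, the matrix `R(w)` with `w = u / v` only involves `E_ii ⊗ E_jj` and
`E_ij ⊗ E_ji`, so each entry of the relation `R (Z(u) ⊗ Z(v)) = (Z(u) ⊗ Z(v)) R` has at most four
terms (`comm_entry`). Two kinds of entries suffice.

* Entries `((i, i), (k, l))` with `k ≠ l` force `Z i k = 0` or `Z i l = 0`, so the invertible
  matrix `Z` is supported on the graph of a permutation `σ` (`exists_perm_of_row`).
* Put `z_i = Z i (σ i)`. Entries `((i, j), (σ j, σ i))` with `i < j` say that `z_j / z_i` is a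
  constant if `σ i < σ j`, and a constant times `u` if `σ j < σ i`.

Comparing with the top row, `z_i` is a constant times `u ^ e_i` times `z_0`, where `e_i` is `1` if
`σ i < σ 0` and `0` otherwise, and consistency gives `e_j = e_i + [σ j < σ i]` for `i < j`. This
makes `i ↦ σ i + N e_i` strictly increasing; its values lie in `[σ 0, σ 0 + N)`, so it is
`i ↦ i + σ 0` (`strictMono_interval`). Hence `σ` is the cyclic shift by `m = σ 0`, and the factors
`u ^ e_i` are the entries of `(Z^ρ)^m` (`ZrhoR_pow_apply`). All relations are evaluated at a fixed
generic `v` and cofinitely many `u`, which determines the rational functions (`eq_of_eval`).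
-/

open Matrix
open scoped Kronecker

noncomputable section

/-- 1-based matrix unit `E_{a b}` in the `N × N` complex matrices. -/
def Em (N : ℕ) (a b : ℕ) : Matrix (Fin N) (Fin N) ℂ :=
  Matrix.of fun i j => if (i : ℕ) + 1 = a ∧ (j : ℕ) + 1 = b then 1 else 0

/-- The flip (permutation) operator `P = Σ_{i,j} E_{ij} ⊗ E_{ji}`. -/
def Pmat (N : ℕ) : Matrix (Fin N × Fin N) (Fin N × Fin N) ℂ :=
  ∑ i ∈ Finset.Icc 1 N, ∑ j ∈ Finset.Icc 1 N, Em N i j ⊗ₖ Em N j i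

/-- The constant R-matrix `R_q`. -/
def Rconst (N : ℕ) (q : ℂ) : Matrix (Fin N × Fin N) (Fin N × Fin N) ℂ :=
  (∑ i ∈ Finset.Icc 1 N, ∑ j ∈ Finset.Icc 1 N,
      (if i = j then q else 1) • (Em N i i ⊗ₖ Em N j j))
    + ∑ i ∈ Finset.Icc 1 N, ∑ j ∈ Finset.Icc 1 N,
        (if i < j then q - q⁻¹ else 0) • (Em N i j ⊗ₖ Em N j i)

/-- `f_q(u) = 1/(q - q⁻¹ u)`. -/
def fBJ (q u : ℂ) : ℂ := (q - q⁻¹ * u)⁻¹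

/-- The Bazhanov–Jimbo R-matrix `R(u) = f_q(u) R_q + f_{q⁻¹}(u⁻¹) P R_{q⁻¹} P`. -/
def RBJ (N : ℕ) (q u : ℂ) : Matrix (Fin N × Fin N) (Fin N × Fin N) ℂ :=
  fBJ q u • Rconst N q + fBJ q⁻¹ u⁻¹ • (Pmat N * Rconst N q⁻¹ * Pmat N)

/-- `X1 = X ⊗ I`. -/
def M1 (N : ℕ) (X : Matrix (Fin N) (Fin N) ℂ) : Matrix (Fin N × Fin N) (Fin N × Fin N) ℂ :=
  X ⊗ₖ (1 : Matrix (Fin N) (Fin N) ℂ)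

/-- `X2 = I ⊗ X`. -/
def M2 (N : ℕ) (X : Matrix (Fin N) (Fin N) ℂ) : Matrix (Fin N × Fin N) (Fin N × Fin N) ℂ :=
  (1 : Matrix (Fin N) (Fin N) ℂ) ⊗ₖ X

/-- `R21(u) = P R(u) P`. -/
def R21 (N : ℕ) (q u : ℂ) : Matrix (Fin N × Fin N) (Fin N × Fin N) ℂ :=
  Pmat N * RBJ N q u * Pmat N

/-- Transposition in the first tensor factor. -/
def t1 (N : ℕ) (X : Matrix (Fin N × Fin N) (Fin N × Fin N) ℂ) :
    Matrix (Fin N × Fin N) (Fin N × Fin N) ℂ :=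
  Matrix.of fun p r => X (r.1, p.2) (p.1, r.2)

/-- The charge conjugation matrix `C = Σ_i (-q)^i E_{ī i}` where `ī = N+1-i`. -/
def Cmat (N : ℕ) (q : ℂ) : Matrix (Fin N) (Fin N) ℂ :=
  ∑ i ∈ Finset.Icc 1 N, (-q) ^ i • Em N (N + 1 - i) i

/-- The C-conjugated R-matrix `R^∨(u) = C2⁻¹ R^{t1}(q̃² u⁻¹) C2` with `q̃ = s^N`. -/
def Rvee (N : ℕ) (q s u : ℂ) : Matrix (Fin N × Fin N) (Fin N × Fin N) ℂ :=
  (M2 N (Cmat N q))⁻¹ * t1 N (RBJ N q ((s ^ N) ^ 2 * u⁻¹)) * M2 N (Cmat N q)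

/-- `R^∨21(u) = P R^∨(u) P`. -/
def Rvee21 (N : ℕ) (q s u : ℂ) : Matrix (Fin N × Fin N) (Fin N × Fin N) ℂ :=
  Pmat N * Rvee N q s u * Pmat N

/-- The untwisted reflection equation at spectral parameters `(u, v)`. -/
def REeq (N : ℕ) (q : ℂ) (K : ℂ → Matrix (Fin N) (Fin N) ℂ) (u v : ℂ) : Prop :=
  R21 N q (u / v) * M1 N (K u) * RBJ N q (u * v) * M2 N (K v)
    = M2 N (K v) * R21 N q (u * v) * M1 N (K u) * RBJ N q (u / v)

/-- `K` satisfies the untwisted reflection equation (RE) for all `u, v`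
for which all factors are defined. -/
def IsRESol (N : ℕ) (q : ℂ) (K : ℂ → Matrix (Fin N) (Fin N) ℂ) : Prop :=
  ∀ u v : ℂ, u ≠ 0 → v ≠ 0 → u / v ≠ q ^ 2 → u / v ≠ q⁻¹ ^ 2 →
    u * v ≠ q ^ 2 → u * v ≠ q⁻¹ ^ 2 → REeq N q K u v

/-- The cross-conjugated twisted reflection equation at `(u, v)`. -/
def CtREeq (N : ℕ) (q s : ℂ) (K : ℂ → Matrix (Fin N) (Fin N) ℂ) (u v : ℂ) : Prop :=
  R21 N q (u / v) * M1 N (K u) * Rvee N q s (u * v) * M2 N (K v)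
    = M2 N (K v) * Rvee21 N q s (u * v) * M1 N (K u) * RBJ N q (u / v)

/-- `K` satisfies the cross-conjugated twisted reflection equation (CtRE) for all
`u, v` for which all factors are defined. -/
def IsCtRESol (N : ℕ) (q s : ℂ) (K : ℂ → Matrix (Fin N) (Fin N) ℂ) : Prop :=
  ∀ u v : ℂ, u ≠ 0 → v ≠ 0 → u / v ≠ q ^ 2 → u / v ≠ q⁻¹ ^ 2 →
    (s ^ N) ^ 2 * (u * v)⁻¹ ≠ q ^ 2 → (s ^ N) ^ 2 * (u * v)⁻¹ ≠ q⁻¹ ^ 2 →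
    CtREeq N q s K u v

/-- Transposition across the antidiagonal: `(M^w)_{ij} = M_{N+1-j, N+1-i}`. -/
def wT (N : ℕ) (M : Matrix (Fin N) (Fin N) ℂ) : Matrix (Fin N) (Fin N) ℂ :=
  Matrix.of fun i j => M (Fin.rev j) (Fin.rev i)

/-- 1-based matrix unit over the field of rational functions. -/
def EmR (N : ℕ) (a b : ℕ) : Matrix (Fin N) (Fin N) (RatFunc ℂ) :=
  Matrix.of fun i j => if (i : ℕ) + 1 = a ∧ (j : ℕ) + 1 = b then 1 else 0

set_option synthInstance.maxHeartbeats 1000000 in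
/-- The rotation matrix `Z^ρ` as a matrix of rational functions. -/
def ZrhoR (N : ℕ) : Matrix (Fin N) (Fin N) (RatFunc ℂ) :=
  (∑ i ∈ Finset.Icc 1 (N - 1), EmR N i (i + 1)) + (RatFunc.X : RatFunc ℂ) • EmR N N 1

/-- Entrywise evaluation of a matrix of rational functions at a point. -/
def evalMat (N : ℕ) (Z : Matrix (Fin N) (Fin N) (RatFunc ℂ)) (u : ℂ) :
    Matrix (Fin N) (Fin N) ℂ :=
  Matrix.of fun i j => (Z i j).eval (RingHom.id ℂ) u

/-! ### Entries of the R-matrix and of the commutation relation -/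

theorem sum_Icc_fin {M : Type*} [AddCommMonoid M] (N : ℕ) (f : ℕ → M) :
    ∑ i ∈ Finset.Icc 1 N, f i = ∑ i : Fin N, f (i + 1) := by
  rw [Fin.sum_univ_eq_sum_range (fun i => f (i + 1)) N, Finset.range_eq_Ico,
    Finset.sum_Ico_add' f 0 N 1]
  rfl

theorem Em_succ (N : ℕ) (a b : Fin N) : Em N (a + 1) (b + 1) = Matrix.single a b 1 := by
  ext i j
  simp [Em, Matrix.single_apply, Fin.ext_iff, eq_comm]

theorem Pmat_apply (N : ℕ) (i j k l : Fin N) :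
    Pmat N (i, j) (k, l) = if i = l ∧ j = k then 1 else 0 := by
  simp only [Pmat, sum_Icc_fin, Em_succ, Matrix.sum_apply, Matrix.kroneckerMap_apply,
    Matrix.single_apply, ite_and, mul_ite, mul_one, mul_zero]
  by_cases h1 : i = l <;> by_cases h2 : j = k <;> simp [h1, h2, eq_comm]

theorem Rconst_apply (N : ℕ) (q : ℂ) (i j k l : Fin N) :
    Rconst N q (i, j) (k, l) = (if i = k ∧ j = l then (if i = j then q else 1) else 0)
      + if i = l ∧ j = k then (if i < j then q - q⁻¹ else 0) else 0 := by
  simp only [Rconst, sum_Icc_fin, Em_succ, Matrix.add_apply, Matrix.sum_apply, Matrix.smul_apply,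
    Matrix.kroneckerMap_apply, Matrix.single_apply, ite_and, mul_ite, mul_one, mul_zero,
    smul_eq_mul, add_lt_add_iff_right, add_left_inj, Fin.val_inj, Fin.val_fin_lt]
  congr 1
  · by_cases h1 : i = k <;> by_cases h2 : j = l <;> simp [h1, h2, eq_comm]
  · by_cases h1 : i = l <;> by_cases h2 : j = k <;> simp [h1, h2, eq_comm]

theorem conj_Pmat_apply (N : ℕ) (A : Matrix (Fin N × Fin N) (Fin N × Fin N) ℂ)
    (i j k l : Fin N) : (Pmat N * A * Pmat N) (i, j) (k, l) = A (j, i) (l, k) := by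
  simp [Matrix.mul_apply, Fintype.sum_prod_type, Pmat_apply, ite_and]

/-- Since `f_{q⁻¹}(w⁻¹) = -w f_q(w)`, the scalar `f_q(w)` factors out of `R(w)`, and what is left is
supported on the positions `((i, j), (i, j))` and `((i, j), (j, i))`. -/
theorem RBJ_apply (N : ℕ) (q w : ℂ) (hq : q ≠ 0) (hw : w ≠ 0) (h : w ≠ q ^ 2)
    (i j k l : Fin N) :
    RBJ N q w (i, j) (k, l) = fBJ q w *
      ((if i = k ∧ j = l then (if i = j then q - q⁻¹ * w else 1 - w) else 0)
      + if i = l ∧ j = k then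
          (if i < j then q - q⁻¹ else if j < i then w * (q - q⁻¹) else 0) else 0) := by
  have hf : fBJ q⁻¹ w⁻¹ = -w * fBJ q w := by
    have h1 : q ^ 2 - w ≠ 0 := sub_ne_zero.2 h.symm
    have h2 : w - q ^ 2 ≠ 0 := sub_ne_zero.2 h
    have e1 : q - q⁻¹ * w = (q ^ 2 - w) / q := by field_simp
    have e2 : q⁻¹ - q⁻¹⁻¹ * w⁻¹ = (w - q ^ 2) / (q * w) := by field_simp
    rw [fBJ, fBJ, e1, e2]
    field_simp
    ring
  simp only [RBJ, hf, Matrix.add_apply, Matrix.smul_apply, smul_eq_mul, conj_Pmat_apply,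
    Rconst_apply, inv_inv]
  rcases lt_trichotomy i j with hij | hij | hij
  · have := hij.ne
    have := hij.ne'
    have := hij.not_gt
    simp only [*, if_true, if_false, and_comm (a := j = l), and_comm (a := j = k)]
    split_ifs <;> ring
  · subst hij
    simp only [lt_irrefl, if_true, if_false, and_comm (a := i = l)]
    split_ifs <;> ring
  · have := hij.ne
    have := hij.ne'
    have := hij.not_gt
    simp only [*, if_true, if_false, and_comm (a := j = l), and_comm (a := j = k)]
    split_ifs <;> ring

/-- Left multiplication by a matrix supported on the identity and the flip of `Fin N × Fin N`. -/
theorem diag_swap_mul {N : ℕ} (A M : Matrix (Fin N × Fin N) (Fin N × Fin N) ℂ)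
    (a b : Fin N → Fin N → ℂ)
    (hA : ∀ i j k l, A (i, j) (k, l)
      = (if i = k ∧ j = l then a i j else 0) + if i = l ∧ j = k then b i j else 0)
    (i j k l : Fin N) :
    (A * M) (i, j) (k, l) = a i j * M (i, j) (k, l) + b i j * M (j, i) (k, l) := by
  have h : ∀ p, A (i, j) p = (if (i, j) = p then a i j else 0) + if (j, i) = p then b i j else 0 := by
    rintro ⟨k, l⟩
    simp only [hA, Prod.mk.injEq, and_comm (a := j = k)]
  simp [Matrix.mul_apply, h, add_mul, Finset.sum_add_distrib]

/-- Right multiplication by a matrix supported on the identity and the flip of `Fin N × Fin N`. -/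
theorem mul_diag_swap {N : ℕ} (A M : Matrix (Fin N × Fin N) (Fin N × Fin N) ℂ)
    (a b : Fin N → Fin N → ℂ)
    (hA : ∀ i j k l, A (i, j) (k, l)
      = (if i = k ∧ j = l then a i j else 0) + if i = l ∧ j = k then b i j else 0)
    (i j k l : Fin N) :
    (M * A) (i, j) (k, l) = a k l * M (i, j) (k, l) + b l k * M (i, j) (l, k) := by
  have h : ∀ p, A p (k, l) = (if p = (k, l) then a k l else 0) + if p = (l, k) then b l k else 0 := by
    rintro ⟨i, j⟩
    simp only [hA, Prod.mk.injEq]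
    congr 1
    · split_ifs with h
      · rw [h.1, h.2]
      · rfl
    · split_ifs with h
      · rw [h.1, h.2]
      · rfl
  simp [Matrix.mul_apply, h, mul_add, Finset.sum_add_distrib, mul_comm]

/-- The commutation relation for `w = u / v`, entry by entry, cleared of the scalar `f_q(w)` and of
the denominator `v`. -/
theorem comm_entry (N : ℕ) (q u v : ℂ) (hq : q ≠ 0) (hu : u ≠ 0) (hv : v ≠ 0)
    (h : u / v ≠ q ^ 2) (x y : Matrix (Fin N) (Fin N) ℂ)
    (hc : RBJ N q (u / v) * (x ⊗ₖ y) = (x ⊗ₖ y) * RBJ N q (u / v)) (i j k l : Fin N) :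
    (if i = j then q * v - q⁻¹ * u else v - u) * (x i k * y j l)
      + (if i < j then (q - q⁻¹) * v else if j < i then (q - q⁻¹) * u else 0) * (x j k * y i l)
    = (if k = l then q * v - q⁻¹ * u else v - u) * (x i k * y j l)
      + (if l < k then (q - q⁻¹) * v else if k < l then (q - q⁻¹) * u else 0)
        * (x i l * y j k) := by
  have hf : fBJ q (u / v) ≠ 0 := by
    rw [fBJ, ne_eq, inv_eq_zero]
    intro h0
    apply h
    field_simp at h0 ⊢
    linear_combination -h0
  have hA : ∀ i j k l, RBJ N q (u / v) (i, j) (k, l) = _ := fun i j k l =>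
    (RBJ_apply N q _ hq (div_ne_zero hu hv) h i j k l).trans
      (by rw [mul_add, mul_ite_zero, mul_ite_zero])
  have key := congrFun (congrFun hc (i, j)) (k, l)
  rw [diag_swap_mul _ _ _ _ hA, mul_diag_swap _ _ _ _ hA] at key
  simp only [Matrix.kroneckerMap_apply] at key
  apply mul_left_cancel₀ hf
  obtain ⟨w, rfl⟩ : ∃ w, u = w * v := ⟨u / v, by field_simp⟩
  rw [mul_div_cancel_right₀ w hv] at key ⊢
  have e1 : ∀ i j : Fin N, (if i = j then q * v - q⁻¹ * (w * v) else v - w * v)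
      = v * (if i = j then q - q⁻¹ * w else 1 - w) := by
    intro i j; split_ifs <;> ring
  have e2 : ∀ i j : Fin N,
      (if i < j then (q - q⁻¹) * v else if j < i then (q - q⁻¹) * (w * v) else 0)
      = v * (if i < j then q - q⁻¹ else if j < i then w * (q - q⁻¹) else 0) := by
    intro i j; split_ifs <;> ring
  simp only [e1, e2]
  linear_combination v * key

/-! ### Values of rational functions -/

/-- `RatFunc.eval` divides by zero at the poles and returns `0` there, so that a value is meaningful
only off the zeros of the denominator; these and the zeros of the numerator are finite in number. -/
theorem eval_ne_zero_cofinite (f : RatFunc ℂ) :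
    ∃ T : Set ℂ, Tᶜ.Finite ∧ ∀ u ∈ T, f.denom.eval u ≠ 0 ∧
      (f ≠ 0 → f.eval (RingHom.id ℂ) u ≠ 0) := by
  by_cases hf : f = 0
  · refine ⟨{u | f.denom.eval u ≠ 0}, ?_, fun u hu => ⟨hu, fun h => absurd hf h⟩⟩
    simpa [Set.compl_ofPred] using Polynomial.finite_setOfPred_isRoot f.denom_ne_zero
  · refine ⟨{u | f.denom.eval u ≠ 0} ∩ {u | f.num.eval u ≠ 0}, ?_, fun u hu => ⟨hu.1, fun _ => ?_⟩⟩
    · rw [Set.compl_inter]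
      refine Set.Finite.union ?_ ?_
      · simpa [Set.compl_ofPred] using Polynomial.finite_setOfPred_isRoot f.denom_ne_zero
      · simpa [Set.compl_ofPred] using Polynomial.finite_setOfPred_isRoot (RatFunc.num_ne_zero hf)
    · rw [RatFunc.eval]
      exact div_ne_zero hu.2 hu.1

/-- An identity `f(u) = c uⁿ g(u)` at cofinitely many points is an identity of rational functions. -/
theorem eq_of_eval (f g : RatFunc ℂ) (c : ℂ) (n : ℕ) (T : Set ℂ) (hT : Tᶜ.Finite)
    (h : ∀ u ∈ T, f.eval (RingHom.id ℂ) u = c * u ^ n * g.eval (RingHom.id ℂ) u) :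
    f = RatFunc.C c * RatFunc.X ^ n * g := by
  by_contra hne
  obtain ⟨T1, hT1, h1⟩ := eval_ne_zero_cofinite f
  obtain ⟨T2, hT2, h2⟩ := eval_ne_zero_cofinite g
  obtain ⟨T3, hT3, h3⟩ := eval_ne_zero_cofinite
    (f + algebraMap (Polynomial ℂ) (RatFunc ℂ) (Polynomial.C (-c) * Polynomial.X ^ n) * g)
  have hfin : (T ∩ (T1 ∩ (T2 ∩ T3)))ᶜ.Finite := by
    simp only [Set.compl_inter]
    exact hT.union (hT1.union (hT2.union hT3))
  obtain ⟨u, hu, hu1, hu2, hu3⟩ : (T ∩ (T1 ∩ (T2 ∩ T3))).Nonempty :=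
    (Set.infinite_of_finite_compl hfin).nonempty
  have hp : (algebraMap (Polynomial ℂ) (RatFunc ℂ)
      (Polynomial.C (-c) * Polynomial.X ^ n)).denom.eval₂ (RingHom.id ℂ) u ≠ 0 := by
    rw [RatFunc.denom_algebraMap]; simp
  have hg : g.denom.eval₂ (RingHom.id ℂ) u ≠ 0 := (h2 u hu2).1
  refine (h3 u hu3).2 ?_ ?_
  · intro h0
    apply hne
    simp at h0
    linear_combination h0
  · rw [RatFunc.eval_add, RatFunc.eval_mul _ _ hp hg, RatFunc.eval_algebraMap, h u hu]
    · simp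
    · exact (h1 u hu1).1
    · intro h0
      have := Polynomial.eval₂_eq_zero_of_dvd_of_eval₂_eq_zero (RingHom.id ℂ) u
        (RatFunc.denom_mul_dvd _ g) h0
      rw [Polynomial.eval₂_mul] at this
      exact (mul_ne_zero hp hg) this

theorem monomial_exp_eq (a b : ℂ) (n m : ℕ) (ha : a ≠ 0)
    (h : RatFunc.C a * RatFunc.X ^ n = (RatFunc.C b * RatFunc.X ^ m : RatFunc ℂ)) : n = m := by
  have h' : (Polynomial.C a * Polynomial.X ^ n : Polynomial ℂ)
      = Polynomial.C b * Polynomial.X ^ m := by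
    apply RatFunc.algebraMap_injective ℂ
    simpa using h
  have := congrArg (fun p => p.coeff n) h'
  simp only [Polynomial.coeff_C_mul, Polynomial.coeff_X_pow] at this
  by_contra hne
  simp [hne] at this
  exact ha this

/-! ### Cyclic shifts and monomial matrices -/

theorem EmR_succ (N : ℕ) (a b : ℕ) (i j : Fin N) :
    EmR N (a + 1) (b + 1) i j = if (i : ℕ) = a ∧ (j : ℕ) = b then 1 else 0 := by
  simp [EmR]

set_option synthInstance.maxHeartbeats 1000000 in
theorem ZrhoR_apply (N : ℕ) (i j : Fin N) :
    ZrhoR N i j = if (j : ℕ) = i + 1 then 1 else if (j : ℕ) + N = i + 1 then RatFunc.X else 0 := by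
  obtain ⟨M, rfl⟩ : ∃ M, N = M + 1 := ⟨N - 1, by have := i.2; omega⟩
  have h1 : ∑ a ∈ Finset.Icc 1 M, EmR (M + 1) a (a + 1) i j = if (j : ℕ) = i + 1 then 1 else 0 := by
    rw [sum_Icc_fin]
    simp only [EmR_succ]
    split_ifs with h
    · rw [Finset.sum_eq_single (⟨i, by omega⟩ : Fin M)]
      · simp [h]
      · intro b _ hb
        rw [if_neg]
        rintro ⟨h1, h2⟩
        exact hb (Fin.ext h1.symm)
      · simp
    · apply Finset.sum_eq_zero
      intro b _
      rw [if_neg]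
      omega
  have h2 : EmR (M + 1) (M + 1) 1 i j = if (j : ℕ) + (M + 1) = i + 1 then 1 else 0 := by
    rw [EmR_succ _ M 0]
    congr 1
    apply propext
    omega
  rw [ZrhoR, Matrix.add_apply, Matrix.sum_apply, Matrix.smul_apply, Nat.add_sub_cancel, h1, h2,
    smul_eq_mul]
  have := i.2
  have := j.2
  split_ifs
  · omega
  all_goals simp

set_option synthInstance.maxHeartbeats 1000000 in
/-- For `m ≤ N` the matrix `(Z^ρ)^m` is the cyclic shift `i ↦ i + m` modulo `N`, with an entry `u`
in the rows where the index wraps around. -/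
theorem ZrhoR_pow_apply (N m : ℕ) (hm : m ≤ N) (i j : Fin N) :
    (ZrhoR N ^ m) i j
      = if (j : ℕ) = i + m then 1 else if (j : ℕ) + N = i + m then RatFunc.X else 0 := by
  induction m generalizing i j with
  | zero =>
    have := i.2
    rw [pow_zero, Matrix.one_apply]
    have h : ¬ ((j : ℕ) + N = i + 0) := by omega
    rw [if_neg h]
    congr 1
    apply propext
    rw [Fin.ext_iff]
    omega
  | succ m ih =>
    rw [pow_succ', Matrix.mul_apply]
    have hi := i.2
    have hj := j.2
    by_cases hlast : (i : ℕ) + 1 < N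
    · rw [Finset.sum_eq_single (⟨i + 1, hlast⟩ : Fin N)]
      · rw [ZrhoR_apply, ih (by omega), if_pos rfl, one_mul]
        simp only [add_assoc, add_comm 1 m]
      · intro b _ hb
        rw [ZrhoR_apply, if_neg, if_neg, zero_mul]
        · omega
        · intro h
          exact hb (Fin.ext h)
      · simp
    · rw [Finset.sum_eq_single (⟨0, by omega⟩ : Fin N)]
      · rw [ZrhoR_apply, ih (by omega), if_neg (by simp), if_pos (by simp; omega)]
        have e1 : ¬ ((j : ℕ) = i + (m + 1)) := by omega
        have e2 : ¬ ((j : ℕ) + N = 0 + m) := by omega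
        have e3 : ((j : ℕ) + N = i + (m + 1)) ↔ (j : ℕ) = 0 + m := by omega
        simp only [e1, e2, e3, if_false]
        split_ifs <;> simp
      · intro b _ hb
        have hb' : (b : ℕ) ≠ 0 := fun h => hb (Fin.ext h)
        rw [ZrhoR_apply, if_neg, if_neg, zero_mul]
        · omega
        · omega
      · simp

/-- A strictly increasing function on `Fin N` with values in an interval of length `N` is a
translation. -/
theorem strictMono_interval {N m : ℕ} (φ : Fin N → ℕ) (hφ : StrictMono φ)
    (h1 : ∀ i, m ≤ φ i) (h2 : ∀ i, φ i < m + N) (i : Fin N) : φ i = i + m := by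
  have lower : ∀ a (h : a < N), a + m ≤ φ ⟨a, h⟩ := by
    intro a
    induction a with
    | zero => intro h; simpa using h1 _
    | succ a ih =>
      intro h
      have := ih (by omega)
      have := hφ (show (⟨a, by omega⟩ : Fin N) < ⟨a + 1, h⟩ by simp)
      omega
  have upper : ∀ b a (h : a < N), a + b + 1 = N → φ ⟨a, h⟩ ≤ a + m := by
    intro b
    induction b with
    | zero => intro a h hab; have := h2 ⟨a, h⟩; omega
    | succ b ih =>
      intro a h hab
      have := ih (a + 1) (by omega) (by omega)
      have := hφ (show (⟨a, h⟩ : Fin N) < ⟨a + 1, by omega⟩ by simp)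
      omega
  have := lower i i.2
  have := upper (N - 1 - i) i i.2 (by omega)
  simp only [Fin.eta] at *
  omega

/-- A square matrix over a field that is invertible and has at most one nonzero entry in each row
is supported on the graph of a permutation. -/
theorem exists_perm_of_row {N : ℕ} {K : Type*} [Field K] (Z : Matrix (Fin N) (Fin N) K)
    (hZ : IsUnit Z) (hrow : ∀ i k l, k ≠ l → Z i k = 0 ∨ Z i l = 0) :
    ∃ σ : Equiv.Perm (Fin N), (∀ i, Z i (σ i) ≠ 0) ∧ ∀ i k, k ≠ σ i → Z i k = 0 := by
  have hdet : Z.det ≠ 0 := ((Matrix.isUnit_iff_isUnit_det Z).1 hZ).ne_zero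
  rw [Matrix.det_apply] at hdet
  obtain ⟨τ, -, hτ⟩ := Finset.exists_ne_zero_of_sum_ne_zero hdet
  have hprod : ∏ i, Z (τ i) i ≠ 0 := fun h => hτ (by rw [h, smul_zero])
  rw [Finset.prod_ne_zero_iff] at hprod
  have hne : ∀ i, Z i (τ.symm i) ≠ 0 := fun i => by
    simpa using hprod (τ.symm i) (Finset.mem_univ _)
  exact ⟨τ.symm, hne, fun i k hk => (hrow i k _ hk).resolve_right (hne i)⟩

/-- Off a finite set, finitely many given rational functions take nonzero values, except those that
are identically zero. -/
theorem exists_generic {ι : Type*} (f : ι → RatFunc ℂ) [Finite ι] (S : Set ℂ) (hS : Sᶜ.Finite) :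
    ∃ T : Set ℂ, Tᶜ.Finite ∧ T ⊆ S ∧ (∀ u ∈ T, u ≠ 0) ∧
      ∀ u ∈ T, ∀ i, f i ≠ 0 → (f i).eval (RingHom.id ℂ) u ≠ 0 := by
  choose U hU hU' using fun i => eval_ne_zero_cofinite (f i)
  refine ⟨(S ∩ {0}ᶜ) ∩ ⋂ i, U i, ?_, fun u hu => hu.1.1, fun u hu => hu.1.2,
    fun u hu i => (hU' i u (Set.mem_iInter.1 hu.2 i)).2⟩
  rw [Set.compl_inter, Set.compl_inter, Set.compl_iInter, compl_compl]
  exact (hS.union (Set.finite_singleton 0)).union (Set.finite_iUnion hU)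

/-! ### The classification -/

set_option synthInstance.maxHeartbeats 1000000 in
/-- classification of the symmetries of the Bazhanov–Jimbo R-matrix:
any invertible rational symmetry is a rational multiple of a constant invertible
diagonal matrix times a power `(Z^ρ)^m`, `0 ≤ m < N`. -/
theorem statement3 (N : ℕ) (hN : 2 ≤ N) (q : ℂ) (hq : q ≠ 0)
    (hroot : ∀ n : ℕ, 0 < n → q ^ n ≠ 1)
    (Z : Matrix (Fin N) (Fin N) (RatFunc ℂ)) (hZ : IsUnit Z)
    (S : Set ℂ) (hS : Sᶜ.Finite)
    (hcomm : ∀ u ∈ S, ∀ v ∈ S, u ≠ 0 → v ≠ 0 → u / v ≠ q ^ 2 → u / v ≠ q⁻¹ ^ 2 →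
      RBJ N q (u / v) * (evalMat N Z u ⊗ₖ evalMat N Z v)
        = (evalMat N Z u ⊗ₖ evalMat N Z v) * RBJ N q (u / v)) :
    ∃ (g : RatFunc ℂ) (d : Fin N → ℂ) (m : ℕ),
      g ≠ 0 ∧ (∀ i, d i ≠ 0) ∧ m < N ∧
      Z = g • (Matrix.diagonal (fun i => algebraMap ℂ (RatFunc ℂ) (d i)) * ZrhoR N ^ m) := by
  obtain ⟨T, hT, hTS, hT0, hTne⟩ :=
    exists_generic (fun p : Fin N × Fin N => Z p.1 p.2) S hS
  have hTne' : ∀ u ∈ T, ∀ i k, Z i k ≠ 0 → evalMat N Z u i k ≠ 0 :=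
    fun u hu i k => hTne u hu (i, k)
  obtain ⟨v, hv⟩ : T.Nonempty := (Set.infinite_of_finite_compl hT).nonempty
  have hv0 := hT0 v hv
  have hq1 : q - 1 ≠ 0 := by
    have := hroot 1 one_pos
    rw [pow_one] at this
    exact sub_ne_zero.2 this
  have hq2 : q ^ 2 - 1 ≠ 0 := sub_ne_zero.2 (hroot 2 two_pos)
  have hqi : q - q⁻¹ ≠ 0 := by
    intro h
    apply hq2
    field_simp at h
    simpa using h
  have hT' : (T ∩ ({v, q ^ 2 * v, q⁻¹ ^ 2 * v} : Set ℂ)ᶜ)ᶜ.Finite := by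
    rw [Set.compl_inter, compl_compl]
    exact hT.union (Set.toFinite _)
  -- `v` is fixed from now on; only `u` varies, over a cofinite set.
  have entry : ∀ u ∈ T ∩ ({v, q ^ 2 * v, q⁻¹ ^ 2 * v} : Set ℂ)ᶜ, _ := fun u hu =>
    comm_entry N q u v hq (hT0 u hu.1) hv0
      (fun h => hu.2 (by rw [div_eq_iff hv0] at h; simp [h])) _ _
      (hcomm u (hTS hu.1) v (hTS hv) (hT0 u hu.1) hv0
        (fun h => hu.2 (by rw [div_eq_iff hv0] at h; simp [h]))
        (fun h => hu.2 (by rw [div_eq_iff hv0] at h; simp [h])))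
  -- The entries `((i, i), (k, l))` and `((i, i), (l, k))` form a linear system whose determinant is
  -- `(q v + u)² - (q + 1)² u v = (u - v)(u - q² v)`.
  have hrow : ∀ i k l, k ≠ l → Z i k = 0 ∨ Z i l = 0 := by
    have main : ∀ i k l, k < l → Z i k = 0 ∨ Z i l = 0 := by
      intro i k l hkl
      by_contra! hcon
      obtain ⟨u, hu⟩ := (Set.infinite_of_finite_compl hT').nonempty
      have e1 := entry u hu i i k l
      have e2 := entry u hu i i l k
      have a1 := hTne' u hu.1 i k hcon.1
      have a2 := hTne' u hu.1 i l hcon.2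
      have a3 := hTne' v hv i k hcon.1
      have a4 := hTne' v hv i l hcon.2
      simp only [if_true, lt_irrefl, if_false, hkl, hkl.ne, hkl.ne', hkl.not_gt, zero_mul,
        add_zero] at e1 e2
      generalize evalMat N Z u i k = x at *
      generalize evalMat N Z u i l = x' at *
      generalize evalMat N Z v i k = y at *
      generalize evalMat N Z v i l = y' at *
      have f1 : (q * v + u) * (x * y') = (q + 1) * u * (x' * y) := by
        apply mul_left_cancel₀ hq1
        field_simp at e1
        linear_combination e1
      have f2 : (q * v + u) * (x' * y) = (q + 1) * v * (x * y') := by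
        apply mul_left_cancel₀ hq1
        field_simp at e2
        linear_combination e2
      have f3 : (u - v) * (u - q ^ 2 * v) * (x * y') = 0 := by
        linear_combination (q * v + u) * f1 + (q + 1) * u * f2
      have n1 : u - v ≠ 0 := sub_ne_zero.2 fun h => hu.2 (by simp [h])
      have n2 : u - q ^ 2 * v ≠ 0 := sub_ne_zero.2 fun h => hu.2 (by simp [h])
      exact mul_ne_zero (mul_ne_zero n1 n2) (mul_ne_zero a1 a4) f3
    intro i k l hkl
    rcases lt_or_gt_of_ne hkl with h | h
    · exact main i k l h
    · exact (main i l k h).symm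
  obtain ⟨σ, hσ, hσ0⟩ := exists_perm_of_row Z hZ hrow
  -- The entry `((i, j), (σ j, σ i))`: the terms with coefficient `v - u` cancel.
  have ratio : ∀ i j, i < j → ∃ c : ℂ, c ≠ 0 ∧ Z j (σ j)
      = RatFunc.C c * RatFunc.X ^ (if σ j < σ i then 1 else 0) * Z i (σ i) := by
    intro i j hij
    have b1 := hTne' v hv i _ (hσ i)
    have b2 := hTne' v hv j _ (hσ j)
    have hne : σ i ≠ σ j := fun h => hij.ne (σ.injective h)
    rcases lt_or_gt_of_ne hne with hs | hs
    · refine ⟨evalMat N Z v j (σ j) / evalMat N Z v i (σ i), div_ne_zero b2 b1, ?_⟩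
      rw [if_neg hs.not_gt]
      refine eq_of_eval _ _ _ _ _ hT' fun u hu => ?_
      have e := entry u hu i j (σ j) (σ i)
      simp only [hij, hij.ne, hs, hs.ne', if_true, if_false] at e
      change evalMat N Z u j (σ j) = _ * evalMat N Z u i (σ i)
      rw [pow_zero, mul_one]
      field_simp
      apply mul_left_cancel₀ (mul_ne_zero hqi hv0)
      linear_combination e
    · refine ⟨evalMat N Z v j (σ j) / (v * evalMat N Z v i (σ i)),
        div_ne_zero b2 (mul_ne_zero hv0 b1), ?_⟩
      rw [if_pos hs]
      refine eq_of_eval _ _ _ _ _ hT' fun u hu => ?_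
      have e := entry u hu i j (σ j) (σ i)
      simp only [hij, hij.ne, hs, hs.ne, hs.not_gt, if_true, if_false] at e
      change evalMat N Z u j (σ j) = _ * evalMat N Z u i (σ i)
      rw [pow_one]
      field_simp
      apply mul_left_cancel₀ hqi
      linear_combination e
  let o : Fin N := ⟨0, by omega⟩
  have hbase : ∀ i, ∃ c : ℂ, c ≠ 0 ∧ Z i (σ i)
      = RatFunc.C c * RatFunc.X ^ (if σ i < σ o then 1 else 0) * Z o (σ o) := by
    intro i
    by_cases hi : i = o
    · exact ⟨1, one_ne_zero, by simp [hi]⟩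
    · exact ratio o i (Fin.lt_def.2 (Nat.pos_of_ne_zero fun h => hi (Fin.ext h)))
  choose d hd hdZ using hbase
  -- Comparison of the powers of `u` in `z_j / z_i`, computed directly and through the top row.
  have hexp : ∀ i j, i < j → (if σ j < σ o then 1 else 0)
      = (if σ j < σ i then 1 else 0) + (if σ i < σ o then 1 else 0) := by
    intro i j hij
    obtain ⟨c, hc, h⟩ := ratio i j hij
    rw [hdZ i, hdZ j] at h
    refine monomial_exp_eq (d j) (c * d i) _ _ (hd j) (mul_right_cancel₀ (hσ o) ?_)
    rw [h, map_mul, pow_add]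
    ring
  -- Unwrapping `σ` by `N` below `σ o` turns the cyclic shift into a translation.
  have htrans := strictMono_interval (N := N) (m := σ o)
    (fun i => σ i + if σ i < σ o then N else 0) ?_ ?_ ?_
  · refine ⟨Z o (σ o), d, σ o, hσ o, hd, (σ o).2, ?_⟩
    ext i k
    have ht := htrans i
    rw [Matrix.smul_apply, Matrix.diagonal_mul, ZrhoR_pow_apply _ _ (σ o).2.le, smul_eq_mul]
    by_cases hk : k = σ i
    · subst hk
      rw [hdZ i, RatFunc.algebraMap_eq_C]
      by_cases h : σ i < σ o
      · rw [if_pos h] at ht ⊢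
        rw [if_neg (by omega), if_pos ht]
        ring
      · rw [if_neg h, add_zero] at ht
        rw [if_neg h, if_pos ht]
        ring
    · rw [hσ0 i k hk]
      have hk' : (k : ℕ) ≠ σ i := fun h => hk (Fin.ext h)
      have := k.2
      have := (σ i).2
      rw [if_neg, if_neg, mul_zero, mul_zero]
      · split_ifs at ht <;> omega
      · split_ifs at ht <;> omega
  · intro i j hij
    have h := hexp i j hij
    have hne : (σ i : ℕ) ≠ σ j := fun h => hij.ne (σ.injective (Fin.ext h))
    have := (σ i).2
    have := (σ j).2
    simp only [Fin.lt_def] at h ⊢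
    split_ifs at h ⊢ <;> omega
  · intro i
    have := (σ o).2
    simp only [Fin.lt_def]
    split_ifs <;> omega
  · intro i
    have := (σ i).2
    simp only [Fin.lt_def]
    split_ifs <;> omega

end
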